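/- Fix 0 < ε < 1 and let p : ℕ → ℝ satisfy 0 ≤ p(n) ≤ 1 − ε for all n. Suppose p(n)·√n / log n → ∞ as n → ∞. Let q(n) denote the Erdős–Rényi probability that a graph drawn from G(n, p(n)) is not Hamiltonian. Then log q(n) / (n · log(1 − p(n))) → 1 as n → ∞; that is, the probability that G(n,p) fails to be Hamiltonian is (1 − p)^{(1+o(1))n}. -/

import Mathlib

open Classical in
/-- The Erdős–Rényi probability that a graph drawn from `G(n, p)` satisfies property `A`. -/
noncomputable def erProb (n : ℕ) (p : ℝ) (A : SimpleGraph (Fin n) → Prop) : ℝ :=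
  ∑ G : SimpleGraph (Fin n),
    if A G then p ^ G.edgeSet.ncard * (1 - p) ^ (n.choose 2 - G.edgeSet.ncard) else 0

namespace List

lemma head?_eq_formPerm_of_getLast? {α : Type*} [DecidableEq α] {l : List α} {x : α}
    (h : l.getLast? = some x) :
    l.head? = some (l.formPerm x) := by
  cases l with
  | nil => simp at h
  | cons a t =>
    have hx : (a :: t).getLast (cons_ne_nil a t) = x := by
      rw [getLast?_eq_some_getLast (cons_ne_nil a t)] at h
      exact Option.some.inj h
    rw [← hx, formPerm_apply_getLast]
    rfl

lemma exists_isRotated_getLast?_eq {α : Type*} {l : List α} {x : α} (hx : x ∈ l) :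
    ∃ l', l ~r l' ∧ l'.getLast? = some x := by
  obtain ⟨s, t, rfl⟩ := append_of_mem hx
  refine ⟨t ++ (s ++ [x]), ?_, by simp⟩
  have h : s ++ x :: t = (s ++ [x]) ++ t := by simp
  rw [h]
  exact isRotated_append

end List

namespace Cycle

lemma chain_coe_iff {α : Type*} {r : α → α → Prop} {l : List α} :
    Cycle.Chain r (l : Cycle α) ↔
      l.IsChain r ∧ ∀ x ∈ l.getLast?, ∀ y ∈ l.head?, r x y := by
  cases l with
  | nil => simp
  | cons a t =>
    rw [Cycle.chain_coe_cons, ← List.cons_append, List.isChain_append]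
    simp

end Cycle

namespace SimpleGraph

variable {V : Type*} {G : SimpleGraph V}

lemma IsHamiltonian.of_cycle_chain [Fintype V] [DecidableEq V] (hV : 3 ≤ Fintype.card V)
    {l : List V} (hl : l.Nodup) (hc : Cycle.Chain G.Adj (l : Cycle V)) (hmem : ∀ v, v ∈ l) :
    G.IsHamiltonian := by
  intro _
  have hlen : l.length = Fintype.card V := by
    rw [← List.toFinset_card_of_nodup hl, ← Finset.card_univ]
    congr 1
    ext v
    simpa using hmem v
  cases l with
  | nil => simp at hlen; omega
  | cons a t =>
    obtain ⟨hch, hlast⟩ := Cycle.chain_coe_iff.1 hc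
    have hne := List.cons_ne_nil a t
    have hadj : G.Adj ((a :: t).getLast hne) ((a :: t).head hne) :=
      hlast _ (by simp [List.getLast?_eq_some_getLast hne]) _ (by simp)
    let w := Walk.ofSupport (a :: t) hne hch
    have hw : w.support = a :: t := Walk.support_ofSupport hne hch
    refine ⟨_, Walk.cons hadj w, ?_⟩
    have hpath : w.IsPath := by
      rw [Walk.isPath_def, hw]
      exact hl
    have hwl : w.length + 1 = Fintype.card V := by
      rw [← Walk.length_support, hw, hlen]
    rw [Walk.isHamiltonianCycle_iff_isCycle_and_length_eq,
      Walk.isCycle_iff_isPath_tail_and_le_length]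
    refine ⟨⟨by
      rwa [Walk.isPath_def, Walk.support_tail_of_not_nil _ Walk.not_nil_cons, Walk.support_cons,
        List.tail_cons, hw], ?_⟩, ?_⟩ <;> rw [Walk.length_cons] <;> omega

/-- A nodup chain closes up to a strictly longer cyclic list when joined with a path disjoint from it
whose first vertex is adjacent to its end and whose last vertex is adjacent to its start. -/
lemma exists_longer_cycle_chain {l P : List V} {h h' x y : V} (hl : l.Nodup)
    (hc : l.IsChain G.Adj) (hx : l.getLast? = some x) (hy : l.head? = some y)
    (hPn : P.Nodup) (hP : P.IsChain G.Adj) (hPh : P.head? = some h) (hPl : P.getLast? = some h')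
    (hd : l.Disjoint P) (hxh : G.Adj x h) (hyh : G.Adj y h') :
    ∃ m : List V, m.Nodup ∧ Cycle.Chain G.Adj (m : Cycle V) ∧ l.length < m.length := by
  refine ⟨l ++ P, hl.append hPn hd, ?_, ?_⟩
  · refine Cycle.chain_coe_iff.2 ⟨List.isChain_append.2 ⟨hc, hP, ?_⟩, ?_⟩
    · simp only [hx, hPh, Option.mem_some_iff]
      rintro _ rfl _ rfl
      exact hxh
    · simp only [List.getLast?_append, List.head?_append, hPl, hy, Option.some_or,
        Option.mem_some_iff]
      rintro _ rfl _ rfl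
      exact hyh.symm
  · have hP0 : P ≠ [] := by rintro rfl; simp at hPh
    have := List.length_pos_iff.2 hP0
    rw [List.length_append]
    omega

/-- Reversing the initial arc of a cyclic list whose two cut edges can be exchanged. -/
lemma isChain_reverse_append {A B : List V} {u v : V}
    (hAB : (A ++ B).IsChain G.Adj) (hu : A.head? = some u) (hv : B.head? = some v)
    (huv : G.Adj u v) : (A.reverse ++ B).IsChain G.Adj := by
  obtain ⟨hA, hB, -⟩ := List.isChain_append.1 hAB
  refine List.isChain_append.2 ⟨?_, hB, ?_⟩
  · rw [List.isChain_reverse]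
    exact hA.imp fun _ _ h => h.symm
  · simp only [List.getLast?_reverse, hu, hv, Option.mem_some_iff]
    rintro _ rfl _ rfl
    exact huv

/-- The vertices reachable from `v` by a walk avoiding the list `l`. -/
def reachAvoiding (G : SimpleGraph V) (l : List V) (v : V) : Set V :=
  {u | ∃ w : G.Walk v u, ∀ x ∈ w.support, x ∉ l}

lemma reachAvoiding_notMem {l : List V} {v u : V} (hu : u ∈ G.reachAvoiding l v) : u ∉ l := by
  obtain ⟨w, hw⟩ := hu
  exact hw _ w.end_mem_support

lemma self_mem_reachAvoiding {l : List V} {v : V} (hv : v ∉ l) : v ∈ G.reachAvoiding l v :=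
  ⟨Walk.nil, by simpa using hv⟩

lemma reachAvoiding_of_adj {l : List V} {v u u' : V} (hu : u ∈ G.reachAvoiding l v)
    (h : G.Adj u u') (hu' : u' ∉ l) : u' ∈ G.reachAvoiding l v := by
  obtain ⟨w, hw⟩ := hu
  refine ⟨w.concat h, fun x hx => ?_⟩
  rw [Walk.support_concat, List.mem_append, List.mem_singleton] at hx
  rcases hx with hx | rfl
  · exact hw x hx
  · exact hu'

lemma exists_path_list_of_reachAvoiding {l : List V} {v u u' : V}
    (hu : u ∈ G.reachAvoiding l v) (hu' : u' ∈ G.reachAvoiding l v) :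
    ∃ P : List V, P.Nodup ∧ P.IsChain G.Adj ∧ P.head? = some u ∧ P.getLast? = some u' ∧
      l.Disjoint P := by
  classical
  obtain ⟨w, hw⟩ := hu
  obtain ⟨w', hw'⟩ := hu'
  let q := (w.reverse.append w').bypass
  refine ⟨q.support, (Walk.bypass_isPath _).support_nodup, q.isChain_adj_support, ?_, ?_, ?_⟩
  · rw [List.head?_eq_some_head q.support_ne_nil, Walk.head_support]
  · rw [List.getLast?_eq_some_getLast q.support_ne_nil, Walk.getLast_support]
  · intro x hxl hxq
    have := Walk.support_bypass_subset_support _ hxq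
    rw [Walk.mem_support_append_iff, Walk.support_reverse, List.mem_reverse] at this
    rcases this with h | h
    · exact hw x h hxl
    · exact hw' x h hxl

lemma not_adj_reachAvoiding_formPerm [DecidableEq V] {l : List V}
    (hl : l.Nodup) (hc : Cycle.Chain G.Adj (l : Cycle V))
    (hmax : ∀ l' : List V, l'.Nodup → Cycle.Chain G.Adj (l' : Cycle V) → l'.length ≤ l.length)
    {v x h h' : V} (hx : x ∈ l)
    (hh : h ∈ G.reachAvoiding l v) (hxh : G.Adj x h) (hh' : h' ∈ G.reachAvoiding l v) :
    ¬ G.Adj (l.formPerm x) h' := by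
  intro hadj
  obtain ⟨l', hr, hlast⟩ := List.exists_isRotated_getLast?_eq hx
  have hhead := List.head?_eq_formPerm_of_getLast? hlast
  rw [← List.formPerm_eq_of_isRotated hl hr] at hhead
  obtain ⟨P, hPn, hPc, hPh, hPl, hd⟩ := exists_path_list_of_reachAvoiding hh hh'
  rw [Cycle.coe_eq_coe.2 hr] at hc
  obtain ⟨m, hm, hmc, hlen⟩ := exists_longer_cycle_chain (hr.nodup_iff.1 hl)
    (Cycle.chain_coe_iff.1 hc).1 hlast hhead hPn hPc hPh hPl
    (fun a ha => hd (hr.mem_iff.2 ha)) hxh hadj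
  exact absurd (hmax m hm hmc) (not_le.2 (hr.perm.length_eq ▸ hlen))

lemma not_adj_formPerm_formPerm [DecidableEq V] {l : List V}
    (hl : l.Nodup) (hc : Cycle.Chain G.Adj (l : Cycle V))
    (hmax : ∀ l' : List V, l'.Nodup → Cycle.Chain G.Adj (l' : Cycle V) → l'.length ≤ l.length)
    {v x y h h' : V} (hx : x ∈ l) (hy : y ∈ l) (hxy : x ≠ y)
    (hh : h ∈ G.reachAvoiding l v) (hxh : G.Adj x h)
    (hh' : h' ∈ G.reachAvoiding l v) (hyh : G.Adj y h') :
    ¬ G.Adj (l.formPerm x) (l.formPerm y) := by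
  intro hadj
  obtain ⟨l', hr, hlast⟩ := List.exists_isRotated_getLast?_eq hx
  have hhead := List.head?_eq_formPerm_of_getLast? hlast
  rw [← List.formPerm_eq_of_isRotated hl hr] at hhead
  obtain ⟨P, hPn, hPc, hPh, hPl, hd⟩ := exists_path_list_of_reachAvoiding hh hh'
  rw [Cycle.coe_eq_coe.2 hr] at hc
  have hl' := hr.nodup_iff.1 hl
  obtain ⟨s, B, hsB⟩ := List.append_of_mem (hr.mem_iff.1 hy)
  have hAB : l' = (s ++ [y]) ++ B := by simp [hsB]
  have hB : B ≠ [] := by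
    rintro rfl
    rw [hsB] at hlast
    simp at hlast
    exact hxy hlast.symm
  have hBlast : B.getLast? = some x := by
    rw [hAB, List.getLast?_append_of_ne_nil _ hB] at hlast
    exact hlast
  have hAhead : (s ++ [y]).head? = some (l.formPerm x) := by
    rw [hAB, List.head?_append_of_ne_nil _ (by simp)] at hhead
    exact hhead
  have hBhead : B.head? = some (l.formPerm y) := by
    have hrot : l' ~r B ++ (s ++ [y]) := by
      rw [hAB]
      exact List.isRotated_append
    have := List.head?_eq_formPerm_of_getLast? (l := B ++ (s ++ [y])) (x := y) (by simp)
    rw [List.head?_append_of_ne_nil _ hB,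
      ← List.formPerm_eq_of_isRotated hl (hr.trans hrot)] at this
    exact this
  set A := s ++ [y] with hA
  have hperm : List.Perm (A.reverse ++ B) l' := by
    rw [hAB]
    exact (List.reverse_perm A).append_right B
  have hrevhead : (A.reverse ++ B).head? = some y := by simp [hA]
  have hrevlast : (A.reverse ++ B).getLast? = some x := by
    rw [List.getLast?_append_of_ne_nil _ hB, hBlast]
  have hchain : (A.reverse ++ B).IsChain G.Adj := by
    refine isChain_reverse_append ?_ hAhead hBhead hadj
    rw [← hAB]
    exact (Cycle.chain_coe_iff.1 hc).1
  obtain ⟨m, hm, hmc, hlen⟩ := exists_longer_cycle_chain (hperm.nodup_iff.2 hl') hchain hrevlast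
    hrevhead hPn hPc hPh hPl (fun a ha => hd (hr.mem_iff.2 (hperm.mem_iff.1 ha))) hxh hyh
  exact absurd (hmax m hm hmc) (not_le.2 (hr.perm.length_eq ▸ hperm.length_eq ▸ hlen))

lemma exists_longest_cycle_chain [Finite V] (G : SimpleGraph V) :
    ∃ l : List V, l.Nodup ∧ Cycle.Chain G.Adj (l : Cycle V) ∧
      ∀ l' : List V, l'.Nodup → Cycle.Chain G.Adj (l' : Cycle V) → l'.length ≤ l.length := by
  classical
  cases nonempty_fintype V
  have hfin : {l : List V | l.Nodup ∧ Cycle.Chain G.Adj (l : Cycle V)}.Finite :=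
    (List.finite_length_le V (Fintype.card V)).subset
      fun l hl => hl.1.length_le_card
  obtain ⟨l, hl, hmax⟩ := Set.exists_max_image _ List.length hfin
    ⟨[], List.nodup_nil, Cycle.Chain.nil _⟩
  exact ⟨l, hl.1, hl.2, fun m hm hmc => hmax m ⟨hm, hmc⟩⟩

/-- A form of the **Chvátal–Erdős theorem**: a graph without independent sets of size `k + 1` that
remains connected after deleting fewer than `k` vertices is Hamiltonian. -/
theorem isHamiltonian_of_not_isIndepSet_of_exists_adj [Fintype V] [DecidableEq V]
    (hV : 3 ≤ Fintype.card V) {k : ℕ} (hk : 0 < k)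
    (hind : ∀ I : Finset V, I.card = k + 1 → ¬ G.IsIndepSet I)
    (hsep : ∀ S A : Finset V, S.card < k → A.Nonempty → Disjoint S A →
      A.card ≤ (S ∪ A)ᶜ.card → ∃ a ∈ A, ∃ b ∈ (S ∪ A)ᶜ, G.Adj a b) :
    G.IsHamiltonian := by
  classical
  obtain ⟨l, hl, hc, hmax⟩ := exists_longest_cycle_chain G
  refine IsHamiltonian.of_cycle_chain hV hl hc ?_
  by_contra! hmiss
  obtain ⟨v, hv⟩ := hmiss
  have hl0 : l ≠ [] := by
    obtain ⟨a, -, b, -, hab⟩ := hsep ∅ {v} (by simpa using hk) (by simp) (by simp) (by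
      rw [Finset.card_compl]
      simp
      omega)
    rintro rfl
    have := hmax [a, b] (by simp [hab.ne]) (by simp [Cycle.chain_coe_cons, hab, hab.symm])
    simp at this
  set H : Finset V := Finset.univ.filter (· ∈ G.reachAvoiding l v) with hH
  set N : Finset V := l.toFinset.filter (fun x => ∃ h ∈ G.reachAvoiding l v, G.Adj x h) with hN
  have hvH := self_mem_reachAvoiding (G := G) hv
  have hsucc : ∀ x ∈ N, l.formPerm x ∉ N := by
    intro x hx hx'
    simp only [hN, Finset.mem_filter, List.mem_toFinset] at hx hx'
    obtain ⟨hxl, h, hh, hadj⟩ := hx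
    obtain ⟨-, h', hh', hadj'⟩ := hx'
    exact not_adj_reachAvoiding_formPerm hl hc hmax hxl hh hadj hh' hadj'
  rcases lt_or_ge N.card k with hlt | hge
  · have hHN : Disjoint N H := by
      rw [Finset.disjoint_left]
      intro x hx hx'
      simp only [hN, hH, Finset.mem_filter, List.mem_toFinset] at hx hx'
      exact reachAvoiding_notMem hx'.2 hx.1
    have hsepd : ∀ a ∈ H, ∀ b ∈ (N ∪ H)ᶜ, ¬ G.Adj a b := by
      intro a ha b hb hab
      simp only [hN, hH, Finset.mem_compl, Finset.mem_union, Finset.mem_filter,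
        List.mem_toFinset, Finset.mem_univ, true_and, not_or, not_and] at ha hb
      by_cases hbl : b ∈ l
      · exact hb.1 hbl ⟨a, ha, hab.symm⟩
      · exact hb.2 (reachAvoiding_of_adj ha hab hbl)
    rcases le_or_gt H.card (N ∪ H)ᶜ.card with hle | hgt
    · obtain ⟨a, ha, b, hb, hab⟩ := hsep N H hlt ⟨v, by simp [hH, hvH]⟩ hHN hle
      exact hsepd a ha b hb hab
    · have hcompl : (N ∪ (N ∪ H)ᶜ)ᶜ = H := by
        ext x
        have : x ∈ N → x ∉ H := fun h => Finset.disjoint_left.1 hHN h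
        simp only [Finset.mem_compl, Finset.mem_union]
        tauto
      have hne : ((N ∪ H)ᶜ).Nonempty := by
        obtain ⟨y, hy⟩ := List.exists_mem_of_ne_nil l hl0
        have key : ∀ z ∈ l, z ∉ N → ((N ∪ H)ᶜ).Nonempty := by
          intro z hz hzN
          refine ⟨z, ?_⟩
          rw [Finset.mem_compl, Finset.mem_union, not_or]
          exact ⟨hzN, fun h => reachAvoiding_notMem (Finset.mem_filter.1 h).2 hz⟩
        by_cases hyN : y ∈ N
        · exact key _ (List.formPerm_apply_mem_of_mem hy) (hsucc y hyN)
        · exact key y hy hyN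
      obtain ⟨a, ha, b, hb, hab⟩ := hsep N (N ∪ H)ᶜ hlt hne
        (by
          rw [Finset.disjoint_left]
          intro x hx
          simp [hx]) (by rw [hcompl]; exact hgt.le)
      rw [hcompl] at hb
      exact hsepd b hb a ha hab.symm
  · have hIv : v ∉ N.image l.formPerm := by
      intro h
      obtain ⟨x, hx, hxv⟩ := Finset.mem_image.1 h
      simp only [hN, Finset.mem_filter, List.mem_toFinset] at hx
      exact hv (hxv ▸ List.formPerm_apply_mem_of_mem hx.1)
    have hcard : k + 1 ≤ (insert v (N.image l.formPerm)).card := by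
      rw [Finset.card_insert_of_notMem hIv,
        Finset.card_image_of_injective _ l.formPerm.injective]
      omega
    obtain ⟨I, hI, hIc⟩ := Finset.exists_subset_card_eq hcard
    refine hind I hIc (Set.Pairwise.mono (Finset.coe_subset.2 hI) ?_)
    have hvadj : ∀ x ∈ N, ¬ G.Adj (l.formPerm x) v := by
      intro x hx
      simp only [hN, Finset.mem_filter, List.mem_toFinset] at hx
      obtain ⟨hxl, h, hh, hadj⟩ := hx
      exact not_adj_reachAvoiding_formPerm hl hc hmax hxl hh hadj hvH
    intro a ha b hb hab
    simp only [Finset.coe_insert, Finset.coe_image, Set.mem_insert_iff, Set.mem_image,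
      Finset.mem_coe] at ha hb
    rcases ha with rfl | ⟨x, hx, rfl⟩ <;> rcases hb with rfl | ⟨y, hy, rfl⟩
    · exact absurd rfl hab
    · exact fun h => hvadj y hy h.symm
    · exact hvadj x hx
    · have hxy : x ≠ y := fun h => hab (by rw [h])
      simp only [hN, Finset.mem_filter, List.mem_toFinset] at hx hy
      obtain ⟨hxl, h, hh, hadj⟩ := hx
      obtain ⟨hyl, h', hh', hadj'⟩ := hy
      exact not_adj_formPerm_formPerm hl hc hmax hxl hyl hxy hh hadj hh' hadj'

end SimpleGraph

section ErdosRenyi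

variable {n : ℕ} {p : ℝ}

open Classical in
lemma erProb_eq_sum_filter (n : ℕ) (p : ℝ) (A : SimpleGraph (Fin n) → Prop) :
    erProb n p A = ∑ G : SimpleGraph (Fin n) with A G,
      p ^ G.edgeSet.ncard * (1 - p) ^ (n.choose 2 - G.edgeSet.ncard) :=
  (Finset.sum_filter _ _).symm

lemma erProb_forall_notMem_edgeSet (n : ℕ) (p : ℝ) (F : Finset (Sym2 (Fin n)))
    (hF : ∀ e ∈ F, ¬ e.IsDiag) :
    erProb n p (fun G => ∀ e ∈ F, e ∉ G.edgeSet) = (1 - p) ^ F.card := by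
  classical
  set E := (⊤ : SimpleGraph (Fin n)).edgeFinset with hE
  have hmemE : ∀ e, e ∈ E ↔ ¬ e.IsDiag := by
    intro e
    rw [hE, SimpleGraph.mem_edgeFinset, SimpleGraph.edgeSet_top]
    simp
  have hEcard : E.card = n.choose 2 := by
    rw [hE, SimpleGraph.card_edgeFinset_top_eq_card_choose_two, Fintype.card_fin]
  have hFE : F ⊆ E := fun e he => (hmemE e).2 (hF e he)
  have hsplit : (E \ F).card + F.card = n.choose 2 := by
    rw [Finset.card_sdiff_add_card_eq_card hFE, hEcard]
  have key : erProb n p (fun G => ∀ e ∈ F, e ∉ G.edgeSet) =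
      ∑ t ∈ (E \ F).powerset, p ^ t.card * (1 - p) ^ (n.choose 2 - t.card) := by
    rw [erProb_eq_sum_filter]
    refine Finset.sum_bij' (fun G _ => G.edgeFinset)
      (fun t _ => SimpleGraph.fromEdgeSet (t : Set (Sym2 (Fin n)))) ?_ ?_ ?_ ?_ ?_
    · intro G hG
      simp only [Finset.mem_filter] at hG
      rw [Finset.mem_powerset]
      intro e he
      rw [SimpleGraph.mem_edgeFinset] at he
      rw [Finset.mem_sdiff, hmemE]
      exact ⟨G.not_isDiag_of_mem_edgeSet he, fun h => hG.2 e h he⟩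
    · intro t ht
      rw [Finset.mem_powerset] at ht
      simp only [Finset.mem_filter, Finset.mem_univ, true_and]
      intro e heF he
      rw [SimpleGraph.edgeSet_fromEdgeSet] at he
      exact (Finset.mem_sdiff.1 (ht he.1)).2 heF
    · intro G _
      simp
    · intro t ht
      rw [Finset.mem_powerset] at ht
      ext e
      simp only [SimpleGraph.mem_edgeFinset, SimpleGraph.edgeSet_fromEdgeSet]
      exact ⟨fun h => h.1, fun h => ⟨h, (hmemE e).1 (Finset.mem_sdiff.1 (ht h)).1⟩⟩
    · intro G _
      rw [← SimpleGraph.coe_edgeFinset, Set.ncard_coe_finset]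
  have hterm : ∀ t ∈ (E \ F).powerset, p ^ t.card * (1 - p) ^ (n.choose 2 - t.card) =
      (1 - p) ^ F.card * (p ^ t.card * (1 - p) ^ ((E \ F).card - t.card)) := by
    intro t ht
    have hle := Finset.card_le_card (Finset.mem_powerset.1 ht)
    have : n.choose 2 - t.card = F.card + ((E \ F).card - t.card) := by omega
    rw [this, pow_add]
    ring
  rw [key, Finset.sum_congr rfl hterm, ← Finset.mul_sum, Finset.sum_pow_mul_eq_add_pow]
  simp

lemma erProb_mono (hp0 : 0 ≤ p) (hp1 : p ≤ 1) {A B : SimpleGraph (Fin n) → Prop}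
    (h : ∀ G, A G → B G) : erProb n p A ≤ erProb n p B := by
  classical
  have hq : 0 ≤ 1 - p := by linarith
  refine Finset.sum_le_sum fun G _ => ?_
  by_cases hA : A G
  · simp [hA, h G hA]
  · rw [if_neg hA]
    split_ifs <;> positivity

lemma erProb_or_le (hp0 : 0 ≤ p) (hp1 : p ≤ 1) (A B : SimpleGraph (Fin n) → Prop) :
    erProb n p (fun G => A G ∨ B G) ≤ erProb n p A + erProb n p B := by
  classical
  have hq : 0 ≤ 1 - p := by linarith
  rw [erProb, erProb, erProb, ← Finset.sum_add_distrib]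
  refine Finset.sum_le_sum fun G _ => ?_
  have : 0 ≤ p ^ G.edgeSet.ncard * (1 - p) ^ (n.choose 2 - G.edgeSet.ncard) := by positivity
  by_cases hA : A G <;> by_cases hB : B G <;> simp [hA, hB, this]

lemma erProb_exists_mem_le (hp0 : 0 ≤ p) (hp1 : p ≤ 1) {ι : Type*} (s : Finset ι)
    (A : ι → SimpleGraph (Fin n) → Prop) :
    erProb n p (fun G => ∃ i ∈ s, A i G) ≤ ∑ i ∈ s, erProb n p (A i) := by
  classical
  induction s using Finset.induction_on with
  | empty => simp [erProb]
  | insert i s hi ih =>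
    rw [Finset.sum_insert hi]
    calc erProb n p (fun G => ∃ j ∈ insert i s, A j G)
        ≤ erProb n p (fun G => A i G ∨ ∃ j ∈ s, A j G) :=
          erProb_mono hp0 hp1 fun G h => by simpa using h
      _ ≤ _ := (erProb_or_le hp0 hp1 _ _).trans (by gcongr)

lemma erProb_isIndepSet (p : ℝ) (I : Finset (Fin n)) :
    erProb n p (fun G => G.IsIndepSet I) = (1 - p) ^ I.card.choose 2 := by
  classical
  have hI : ∀ G : SimpleGraph (Fin n), G.IsIndepSet I ↔
      ∀ e ∈ I.sym2.filter (fun e => ¬ e.IsDiag), e ∉ G.edgeSet := by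
    intro G
    constructor
    · intro h e
      induction e using Sym2.ind with
      | _ a b =>
        intro he
        simp only [Finset.mem_filter, Finset.mk_mem_sym2_iff, Sym2.mk_isDiag_iff] at he
        exact h he.1.1 he.1.2 he.2
    · intro h a ha b hb hab
      exact h s(a, b) (by simpa using ⟨⟨ha, hb⟩, hab⟩)
  simp only [hI]
  rw [erProb_forall_notMem_edgeSet _ _ _ (by simp)]
  congr 1
  rw [← Sym2.card_image_offDiag, Finset.sym2_eq_image, Finset.filter_image]
  congr 1
  ext e
  simp only [Finset.mem_image, Finset.mem_filter, Finset.mem_product, Finset.mem_offDiag]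
  constructor
  · rintro ⟨⟨a, b⟩, ⟨h, h'⟩, rfl⟩
    exact ⟨(a, b), ⟨h.1, h.2, by simpa using h'⟩, rfl⟩
  · rintro ⟨⟨a, b⟩, ⟨h, h', h''⟩, rfl⟩
    exact ⟨(a, b), ⟨⟨h, h'⟩, by simpa using h''⟩, rfl⟩

lemma erProb_forall_not_adj (p : ℝ) {A B : Finset (Fin n)} (hAB : Disjoint A B) :
    erProb n p (fun G => ∀ a ∈ A, ∀ b ∈ B, ¬ G.Adj a b) = (1 - p) ^ (A.card * B.card) := by
  classical
  have hF : ∀ G : SimpleGraph (Fin n), (∀ a ∈ A, ∀ b ∈ B, ¬ G.Adj a b) ↔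
      ∀ e ∈ (A ×ˢ B).image (fun x => s(x.1, x.2)), e ∉ G.edgeSet := by
    intro G
    simp only [Finset.forall_mem_image, Finset.mem_product, Prod.forall, SimpleGraph.mem_edgeSet]
    exact ⟨fun h a b hab => h a hab.1 b hab.2, fun h a ha b hb => h a b ⟨ha, hb⟩⟩
  simp only [hF]
  rw [erProb_forall_notMem_edgeSet, Finset.card_image_of_injOn, Finset.card_product]
  · rintro ⟨a, b⟩ h ⟨a', b'⟩ h' heq
    simp only [Finset.coe_product, Set.mem_prod, Finset.mem_coe] at h h'
    rcases Sym2.eq_iff.1 heq with ⟨h1, h2⟩ | ⟨h1, h2⟩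
    · exact Prod.ext h1 h2
    · dsimp only at h1
      exact absurd (h1 ▸ h'.2) (Finset.disjoint_left.1 hAB h.1)
  · simp only [Finset.forall_mem_image, Finset.mem_product, Prod.forall, Sym2.mk_isDiag_iff]
    rintro a b ⟨ha, hb⟩ rfl
    exact Finset.disjoint_left.1 hAB ha hb

lemma le_erProb_not_isHamiltonian (hn : 2 ≤ n) (hp0 : 0 ≤ p) (hp1 : p ≤ 1) :
    (1 - p) ^ (n - 1) ≤ erProb n p (fun G => ¬ G.IsHamiltonian) := by
  have : NeZero n := ⟨by omega⟩
  have : Nontrivial (Fin n) := Fin.nontrivial_iff_two_le.2 hn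
  have hprob := erProb_forall_not_adj p (A := {(0 : Fin n)}) (B := {0}ᶜ) disjoint_compl_right
  rw [Finset.card_compl, Finset.card_singleton, Fintype.card_fin, one_mul] at hprob
  rw [← hprob]
  refine erProb_mono hp0 hp1 fun G hG hham => ?_
  obtain ⟨v, hv⟩ := hham.connected.preconnected.exists_adj_of_nontrivial 0
  exact hG 0 (by simp) v (by simpa using hv.ne') hv

lemma sum_inv_pow_card_le_three (n : ℕ) :
    ∑ A : Finset (Fin n), ((n : ℝ)⁻¹) ^ A.card ≤ 3 := by
  have h : ∑ A : Finset (Fin n), ((n : ℝ)⁻¹) ^ A.card = ((n : ℝ)⁻¹ + 1) ^ n := by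
    have := Finset.sum_pow_mul_eq_add_pow ((n : ℝ)⁻¹) 1 (Finset.univ : Finset (Fin n))
    simpa using this
  rw [h]
  calc ((n : ℝ)⁻¹ + 1) ^ n ≤ (Real.exp ((n : ℝ)⁻¹)) ^ n := by
        gcongr
        exact Real.add_one_le_exp _
    _ = Real.exp (n * (n : ℝ)⁻¹) := (Real.exp_nat_mul _ _).symm
    _ ≤ Real.exp 1 := by
        gcongr
        exact mul_inv_le_one
    _ ≤ 3 := by
        have := Real.exp_one_lt_d9
        linarith

/-- The weighted count of cuts into parts of sizes `a` and `b` is dominated by that of cutting off a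
single vertex. -/
lemma pow_mul_pow_mul_le {x y : ℝ} (hx : 0 ≤ x) (hy : 0 ≤ y) {a b : ℕ} (ha : 1 ≤ a) (hb : 1 ≤ b)
    (h : x * y ^ (b - 1) ≤ 1) : x ^ a * y ^ (a * b) ≤ x * y ^ (a + b - 1) := by
  obtain ⟨a, rfl⟩ := Nat.exists_eq_add_of_le' ha
  obtain ⟨b, rfl⟩ := Nat.exists_eq_add_of_le' hb
  rw [Nat.add_sub_cancel] at h
  have hexp : a + 1 + (b + 1) - 1 = a + b + 1 := by omega
  calc x ^ (a + 1) * y ^ ((a + 1) * (b + 1)) = (x * y ^ b) ^ a * (x * y ^ (a + b + 1)) := by ring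
    _ ≤ 1 * (x * y ^ (a + b + 1)) := by
        gcongr
        exact pow_le_one₀ (by positivity) h
    _ = _ := by rw [one_mul, hexp]

lemma erProb_not_isHamiltonian_le {k : ℕ} (hn : 3 ≤ n) (hk : 0 < k) (hp0 : 0 ≤ p) (hp1 : p ≤ 1)
    (hsmall : ∀ b : ℕ, n + 1 ≤ 2 * b + k → n * (1 - p) ^ (b - 1) ≤ 1) :
    erProb n p (fun G => ¬ G.IsHamiltonian) ≤
      (n : ℝ) ^ (k + 1) * (1 - p) ^ (k + 1).choose 2 +
        9 * ((n : ℝ) ^ (k + 1) * (1 - p) ^ (n - k)) := by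
  classical
  have hq : 0 ≤ 1 - p := by linarith
  have hq1 : 1 - p ≤ 1 := by linarith
  have hn0 : (0 : ℝ) < n := by
    have : 0 < n := by omega
    exact_mod_cast this
  have hn1 : (1 : ℝ) ≤ n := by
    have : 1 ≤ n := by omega
    exact_mod_cast this
  let cuts : Finset (Finset (Fin n) × Finset (Fin n)) := Finset.univ.filter fun c =>
    c.1.card < k ∧ c.2.Nonempty ∧ Disjoint c.1 c.2 ∧ c.2.card ≤ (c.1 ∪ c.2)ᶜ.card
  have hunion : erProb n p (fun G => ¬ G.IsHamiltonian) ≤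
      erProb n p (fun G => ∃ I ∈ Finset.univ.powersetCard (k + 1),
        G.IsIndepSet (I : Finset (Fin n)))
      + erProb n p (fun G => ∃ c ∈ cuts, ∀ a ∈ c.2, ∀ b ∈ (c.1 ∪ c.2)ᶜ, ¬ G.Adj a b) := by
    refine le_trans (erProb_mono hp0 hp1 fun G hG => ?_) (erProb_or_le hp0 hp1 _ _)
    by_contra! hcon
    refine hG (SimpleGraph.isHamiltonian_of_not_isIndepSet_of_exists_adj
      (by simpa using hn) hk (fun I hI => hcon.1 I (by simpa using hI)) ?_)
    intro S A hS hA hSA hle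
    exact hcon.2 (S, A) (Finset.mem_filter.2 ⟨Finset.mem_univ _, hS, hA, hSA, hle⟩)
  refine hunion.trans (add_le_add ?_ ?_)
  · refine (erProb_exists_mem_le hp0 hp1 _ _).trans ?_
    calc ∑ I ∈ (Finset.univ : Finset (Fin n)).powersetCard (k + 1),
          erProb n p (fun G => G.IsIndepSet I)
        = ∑ I ∈ (Finset.univ : Finset (Fin n)).powersetCard (k + 1),
            (1 - p) ^ (k + 1).choose 2 := by
          refine Finset.sum_congr rfl fun I hI => ?_
          rw [erProb_isIndepSet, (Finset.mem_powersetCard.1 hI).2]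
      _ = (n.choose (k + 1) : ℝ) * (1 - p) ^ (k + 1).choose 2 := by
          rw [Finset.sum_const, Finset.card_powersetCard, Finset.card_univ, Fintype.card_fin,
            nsmul_eq_mul]
      _ ≤ _ := by
          gcongr
          exact_mod_cast Nat.choose_le_pow n (k + 1)
  · refine (erProb_exists_mem_le hp0 hp1 _ _).trans ?_
    have hterm : ∀ c ∈ cuts,
        erProb n p (fun G => ∀ a ∈ c.2, ∀ b ∈ (c.1 ∪ c.2)ᶜ, ¬ G.Adj a b) ≤
        (n : ℝ) ^ (k + 1) * (1 - p) ^ (n - k) *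
          (((n : ℝ)⁻¹) ^ c.1.card * ((n : ℝ)⁻¹) ^ c.2.card) := by
      rintro ⟨S, A⟩ hc
      obtain ⟨-, hS, hA, hSA, hle⟩ := Finset.mem_filter.1 hc
      dsimp only at hS hA hSA hle ⊢
      rw [erProb_forall_not_adj]
      swap
      · rw [Finset.disjoint_left]
        intro x hx
        simp [hx]
      have hA1 : 1 ≤ A.card := hA.card_pos
      have hsum : S.card + A.card + (S ∪ A)ᶜ.card = n := by
        rw [← Finset.card_union_of_disjoint hSA, Finset.card_add_card_compl, Fintype.card_fin]
      set b := (S ∪ A)ᶜ.card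
      have hmain := pow_mul_pow_mul_le hn0.le hq hA1 (hA1.trans hle) (hsmall b (by omega))
      have hpow : (1 - p) ^ (A.card + b - 1) ≤ (1 - p) ^ (n - k) :=
        pow_le_pow_of_le_one hq hq1 (by omega)
      have hSk : (n : ℝ) ^ S.card ≤ (n : ℝ) ^ k := pow_le_pow_right₀ hn1 hS.le
      rw [inv_pow, inv_pow, ← mul_inv, ← div_eq_mul_inv, le_div_iff₀ (by positivity)]
      calc (1 - p) ^ (A.card * b) * ((n : ℝ) ^ S.card * (n : ℝ) ^ A.card)
          = (n : ℝ) ^ S.card * ((n : ℝ) ^ A.card * (1 - p) ^ (A.card * b)) := by ring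
        _ ≤ (n : ℝ) ^ k * (n * (1 - p) ^ (n - k)) :=
            mul_le_mul hSk (hmain.trans (by gcongr)) (by positivity) (by positivity)
        _ = _ := by ring
    calc _ ≤ ∑ c ∈ cuts, (n : ℝ) ^ (k + 1) * (1 - p) ^ (n - k) *
          (((n : ℝ)⁻¹) ^ c.1.card * ((n : ℝ)⁻¹) ^ c.2.card) := Finset.sum_le_sum hterm
      _ ≤ ∑ c : Finset (Fin n) × Finset (Fin n), (n : ℝ) ^ (k + 1) * (1 - p) ^ (n - k) *
          (((n : ℝ)⁻¹) ^ c.1.card * ((n : ℝ)⁻¹) ^ c.2.card) :=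
          Finset.sum_le_univ_sum_of_nonneg fun c => by positivity
      _ = (n : ℝ) ^ (k + 1) * (1 - p) ^ (n - k) *
          ((∑ S : Finset (Fin n), ((n : ℝ)⁻¹) ^ S.card) *
            ∑ A : Finset (Fin n), ((n : ℝ)⁻¹) ^ A.card) := by
          rw [← Finset.mul_sum, Fintype.sum_mul_sum, Fintype.sum_prod_type]
      _ ≤ (n : ℝ) ^ (k + 1) * (1 - p) ^ (n - k) * (3 * 3) := by
          gcongr <;> exact sum_inv_pow_card_le_three n
      _ = _ := by ring

end ErdosRenyi

lemma erProb_not_isHamiltonian_le_of_log_le {n : ℕ} {p : ℝ} (hn : 100 ≤ n) (hp0 : 0 ≤ p)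
    (hp1 : p < 1) (hlog : Real.log n ≤ p * √n) :
    erProb n p (fun G => ¬ G.IsHamiltonian) ≤
      (n : ℝ) ^ (2 * (n.sqrt + 1) + 2) * (1 - p) ^ (n - 2 * (n.sqrt + 1)) := by
  have hq : 0 < 1 - p := by linarith
  have hn' : (100 : ℝ) ≤ n := by exact_mod_cast hn
  have hsqrt : (n.sqrt : ℝ) ≤ √n := Real.nat_sqrt_le_real_sqrt
  have hs : √(n : ℝ) * √n = n := Real.mul_self_sqrt (by positivity)
  have hs10 : 10 ≤ √(n : ℝ) := Real.le_sqrt_of_sq_le (by linarith)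
  set k := 2 * (n.sqrt + 1) with hk
  have hkr : (k : ℝ) ≤ 2 * √n + 2 := by
    rw [hk]
    push_cast
    linarith
  have hsmall : ∀ b : ℕ, n + 1 ≤ 2 * b + k → n * (1 - p) ^ (b - 1) ≤ 1 := by
    intro b hb
    have hbr : (n : ℝ) + 1 ≤ 2 * b + k := by exact_mod_cast hb
    have hb1 : √n ≤ (b : ℝ) - 1 := by nlinarith
    have hb2 : ((b - 1 : ℕ) : ℝ) = (b : ℝ) - 1 := by
      have : (1 : ℝ) ≤ b := by linarith
      rw [Nat.cast_sub (by exact_mod_cast this), Nat.cast_one]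
    have hpow : (1 - p) ^ (b - 1) ≤ Real.exp (-Real.log n) := by
      calc (1 - p) ^ (b - 1) ≤ Real.exp (-p) ^ (b - 1) := by
            gcongr
            exact Real.one_sub_le_exp_neg p
        _ = Real.exp ((b - 1 : ℕ) * -p) := (Real.exp_nat_mul _ _).symm
        _ ≤ Real.exp (-Real.log n) := by
            gcongr
            rw [hb2]
            nlinarith
    rw [Real.exp_neg, Real.exp_log (by linarith)] at hpow
    calc (n : ℝ) * (1 - p) ^ (b - 1) ≤ n * (n : ℝ)⁻¹ := by gcongr
      _ ≤ 1 := mul_inv_le_one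
  refine (erProb_not_isHamiltonian_le (k := k) (by omega) (by omega) hp0 hp1.le hsmall).trans ?_
  have hpow : (1 - p) ^ (k + 1).choose 2 ≤ (1 - p) ^ (n - k) := by
    refine pow_le_pow_of_le_one hq.le (by linarith) ?_
    have : n < (n.sqrt + 1) * (n.sqrt + 1) := Nat.lt_succ_sqrt n
    have : (k + 1).choose 2 = (k + 1) * (n.sqrt + 1) := by
      rw [Nat.choose_two_right, Nat.add_sub_cancel, hk]
      exact Nat.div_eq_of_eq_mul_left two_pos (by ring)
    have : (n.sqrt + 1) * (n.sqrt + 1) ≤ (k + 1) * (n.sqrt + 1) :=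
      Nat.mul_le_mul_right _ (by omega)
    omega
  calc (n : ℝ) ^ (k + 1) * (1 - p) ^ (k + 1).choose 2 +
        9 * ((n : ℝ) ^ (k + 1) * (1 - p) ^ (n - k))
      ≤ (n : ℝ) ^ (k + 1) * (1 - p) ^ (n - k) +
        9 * ((n : ℝ) ^ (k + 1) * (1 - p) ^ (n - k)) := by gcongr
    _ = 10 * ((n : ℝ) ^ (k + 1) * (1 - p) ^ (n - k)) := by ring
    _ ≤ n * ((n : ℝ) ^ (k + 1) * (1 - p) ^ (n - k)) := by
        gcongr
        linarith
    _ = _ := by ring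

lemma log_erProb_div_bounds {n : ℕ} {p r : ℝ} (hn : 100 ≤ n) (hp0 : 0 < p) (hp1 : p < 1)
    (hr : 1 ≤ r) (hrp : p * √n = r * Real.log n) :
    1 - 4 / √n - 6 / r ≤ Real.log (erProb n p (fun G => ¬ G.IsHamiltonian)) /
        (n * Real.log (1 - p)) ∧
      Real.log (erProb n p (fun G => ¬ G.IsHamiltonian)) / (n * Real.log (1 - p)) ≤ 1 := by
  have hq : 0 < 1 - p := by linarith
  have hn' : (100 : ℝ) ≤ n := by exact_mod_cast hn
  have hs : √(n : ℝ) * √n = n := Real.mul_self_sqrt (by positivity)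
  have hs10 : 10 ≤ √(n : ℝ) := Real.le_sqrt_of_sq_le (by linarith)
  have hlogn : 0 ≤ Real.log n := Real.log_nonneg (by linarith)
  have hlogp : Real.log (1 - p) ≤ -p := by
    have := Real.log_le_sub_one_of_pos hq
    linarith
  have hlow := le_erProb_not_isHamiltonian (n := n) (by omega) hp0.le hp1.le
  have hup := erProb_not_isHamiltonian_le_of_log_le hn hp0.le hp1 (by nlinarith)
  set Q := erProb n p (fun G => ¬ G.IsHamiltonian)
  have hQ : 0 < Q := (pow_pos hq _).trans_le hlow
  have hneg : n * Real.log (1 - p) < 0 := by nlinarith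
  constructor
  · rw [le_div_iff_of_neg hneg]
    have hsqrt : (n.sqrt : ℝ) ≤ √n := Real.nat_sqrt_le_real_sqrt
    set k := 2 * (n.sqrt + 1) with hk
    have hkr : (k : ℝ) ≤ 2 * √n + 2 := by
      rw [hk]
      push_cast
      linarith
    have hkn : k ≤ n := by
      have : (k : ℝ) ≤ n := by nlinarith
      exact_mod_cast this
    have hlogQ := Real.log_le_log hQ hup
    rw [Real.log_mul (by positivity) (by positivity), Real.log_pow, Real.log_pow,
      Nat.cast_sub hkn] at hlogQ
    push_cast at hlogQ
    have hfirst : ((k : ℝ) + 2) * Real.log n ≤ 6 / r * (n * -Real.log (1 - p)) := by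
      have hlogeq : Real.log n = p * √n / r := by
        rw [eq_div_iff (by linarith), hrp, mul_comm]
      calc ((k : ℝ) + 2) * Real.log n ≤ 6 * √n * Real.log n := by
            gcongr
            linarith
        _ = 6 / r * (n * p) := by
            rw [hlogeq]
            linear_combination 6 * p / r * hs
        _ ≤ 6 / r * (n * -Real.log (1 - p)) := by
            gcongr
            linarith
    have hsecond : (k : ℝ) * -Real.log (1 - p) ≤ 4 / √n * (n * -Real.log (1 - p)) := by
      have : 4 / √n * (n : ℝ) = 4 * √n := by
        nth_rewrite 2 [← hs]
        field_simp
      rw [← mul_assoc, this]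
      exact mul_le_mul_of_nonneg_right (by linarith) (by linarith)
    linarith
  · rw [div_le_one_of_neg hneg]
    have := Real.log_le_log (pow_pos hq _) hlow
    rw [Real.log_pow, Nat.cast_sub (by omega), Nat.cast_one] at this
    linarith

theorem random_hamiltonicity_failure_probability_asymptotics
    (ε : ℝ) (hε0 : 0 < ε) (hε1 : ε < 1)
    (p : ℕ → ℝ) (hp0 : ∀ n, 0 ≤ p n) (hp1 : ∀ n, p n ≤ 1 - ε)
    (hlim : Filter.Tendsto (fun n : ℕ => p n * Real.sqrt n / Real.log n)
      Filter.atTop Filter.atTop) :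
    Filter.Tendsto
      (fun n : ℕ =>
        Real.log (erProb n (p n) (fun G => ¬ G.IsHamiltonian)) /
          (n * Real.log (1 - p n)))
      Filter.atTop (nhds 1) := by
  have hbounds : ∀ᶠ n : ℕ in Filter.atTop, _ :=
    (Filter.eventually_ge_atTop 100).and (hlim.eventually_ge_atTop 1) |>.mono
      fun n ⟨hn, hr⟩ => by
        have hlogn : 0 < Real.log n := Real.log_pos (by exact_mod_cast (by omega : 1 < n))
        have hpos : p n ≠ 0 := by
          intro h
          rw [h, zero_mul, zero_div] at hr
          linarith
        exact log_erProb_div_bounds hn ((hp0 n).lt_of_ne' hpos) ((hp1 n).trans_lt (by linarith))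
          hr (div_mul_cancel₀ _ hlogn.ne').symm
  have hsqrt : Filter.Tendsto (fun n : ℕ => √(n : ℝ)) Filter.atTop Filter.atTop :=
    Real.tendsto_sqrt_atTop.comp tendsto_natCast_atTop_atTop
  have hlower : Filter.Tendsto
      (fun n : ℕ => 1 - 4 / √(n : ℝ) - 6 / (p n * √n / Real.log n)) Filter.atTop (nhds 1) := by
    simpa using (tendsto_const_nhds.sub (hsqrt.const_div_atTop 4)).sub (hlim.const_div_atTop 6)
  exact tendsto_of_tendsto_of_tendsto_of_le_of_le' hlower tendsto_const_nhds
    (hbounds.mono fun _ h => h.1) (hbounds.mono fun _ h => h.2)
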